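/- Let B be an associative algebra smooth over R and M a finitely generated projective B-bimodule (possibly graded). Then the tensor algebra A = T_B M is smooth over R, i.e., A is finitely generated over R and Ω¹_R A is a projective A-bimodule. -/

import Mathlib

/-!
STATEMENT 5: If `B` is smooth over `R` and `M` is a finitely generated
projective `B`-bimodule, then the tensor algebra `A = T_B M` is smooth over
`R`: `A` is finitely generated over `R` and `Ω¹_R A` is a projective
`A`-bimodule.

Smoothness is encoded concretely: `Ω¹_R C = ker(C ⊗_R C → C)` (with `C ⊗_R C`
a quotient of `C ⊗_k C`), and projectivity of a bimodule is encoded as being a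
bimodule retract of a finite free bimodule `(C ⊗ Cᵐᵒᵖ)ⁿ`; finite generation
over `R` means generated as a `k`-algebra by the image of `R` and finitely
many elements.  `A = T_B M` is encoded by the universal property.
-/

open TensorProduct MulOpposite

noncomputable section
namespace Stmt5

variable (k : Type) [Field k]

section Omega
variable (R : Type) [Ring R] [Algebra k R]
variable (C : Type) [Ring C] [Algebra k C] (ρ : R →ₐ[k] C)

/-- Balancing submodule defining `C ⊗_R C` as a quotient of `C ⊗_k C`. -/
def Bal : Submodule k (C ⊗[k] C) :=
  Submodule.span k {z | ∃ (x y : C) (r : R), z = (x * ρ r) ⊗ₜ[k] y - x ⊗ₜ[k] (ρ r * y)}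

abbrev QR := (C ⊗[k] C) ⧸ Bal k R C ρ

/-- Left (outer) action on `C ⊗_R C`. -/
def lact (a : C) : QR k R C ρ →ₗ[k] QR k R C ρ :=
  Submodule.mapQ _ _ (LinearMap.mulLeft k ((a : C) ⊗ₜ[k] (1 : C))) (by
    rw [Bal, Submodule.span_le]
    rintro z ⟨x, y, r, rfl⟩
    simp only [SetLike.mem_coe, Submodule.mem_comap, LinearMap.mulLeft_apply, mul_sub,
      Algebra.TensorProduct.tmul_mul_tmul, mul_one, one_mul]
    exact Submodule.subset_span ⟨a * x, y, r, by rw [mul_assoc]⟩)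

/-- Right (outer) action on `C ⊗_R C`. -/
def ract (b : C) : QR k R C ρ →ₗ[k] QR k R C ρ :=
  Submodule.mapQ _ _ (LinearMap.mulRight k ((1 : C) ⊗ₜ[k] (b : C))) (by
    rw [Bal, Submodule.span_le]
    rintro z ⟨x, y, r, rfl⟩
    simp only [SetLike.mem_coe, Submodule.mem_comap, LinearMap.mulRight_apply, sub_mul,
      Algebra.TensorProduct.tmul_mul_tmul, mul_one, one_mul]
    exact Submodule.subset_span ⟨x, y * b, r, by rw [mul_assoc]⟩)

/-- Multiplication `C ⊗_R C → C`. -/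
def mulBar : QR k R C ρ →ₗ[k] C :=
  Submodule.liftQ _ (LinearMap.mul' k C) (by
    rw [Bal, Submodule.span_le]
    rintro z ⟨x, y, r, rfl⟩
    simp [LinearMap.mul'_apply, mul_assoc])

/-- `Ω¹_R C`. -/
def Omega : Submodule k (QR k R C ρ) := LinearMap.ker (mulBar k R C ρ)

/-- `Ω¹_R C` is a projective `C`-bimodule: it is a bimodule retract of a
finite free bimodule `(C ⊗ Cᵐᵒᵖ)ⁿ`. -/
def OmegaIsProjectiveBimodule : Prop :=
  ∃ (n : ℕ) (f : ↥(Omega k R C ρ) →ₗ[k] (Fin n → C ⊗[k] Cᵐᵒᵖ))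
    (g : (Fin n → C ⊗[k] Cᵐᵒᵖ) →ₗ[k] ↥(Omega k R C ρ)),
    (∀ x, g (f x) = x) ∧
    (∀ (a : C) (x y : ↥(Omega k R C ρ)), (y : QR k R C ρ) = lact k R C ρ a x →
      f y = fun i => (a ⊗ₜ[k] (1 : Cᵐᵒᵖ)) * f x i) ∧
    (∀ (a : C) (x y : ↥(Omega k R C ρ)), (y : QR k R C ρ) = ract k R C ρ a x →
      f y = fun i => ((1 : C) ⊗ₜ[k] op a) * f x i) ∧
    (∀ (a : C) (v : Fin n → C ⊗[k] Cᵐᵒᵖ),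
      ((g (fun i => (a ⊗ₜ[k] (1 : Cᵐᵒᵖ)) * v i) : ↥(Omega k R C ρ)) : QR k R C ρ) =
        lact k R C ρ a (g v)) ∧
    (∀ (a : C) (v : Fin n → C ⊗[k] Cᵐᵒᵖ),
      ((g (fun i => ((1 : C) ⊗ₜ[k] op a) * v i) : ↥(Omega k R C ρ)) : QR k R C ρ) =
        ract k R C ρ a (g v))

/-- `C` is finitely generated over `R`. -/
def IsFGOverR : Prop :=
  ∃ S : Finset C, Algebra.adjoin k (Set.range ρ ∪ ↑S) = ⊤

/-- Smoothness of `C` over `R`. -/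
def IsSmoothOver : Prop := IsFGOverR k R C ρ ∧ OmegaIsProjectiveBimodule k R C ρ

end Omega

section Bimodule

variable {k}
variable {B A E : Type} [Ring B] [Algebra k B] [Ring A] [Algebra k A] [Ring E] [Algebra k E]
variable (φ : B →ₐ[k] A) (φ' : B →ₐ[k] E)
variable {N : Type} [AddCommGroup N] [Module k N] [Module A N] [Module Aᵐᵒᵖ N]
  [SMulCommClass A Aᵐᵒᵖ N] [IsScalarTower k A N] [IsScalarTower k Aᵐᵒᵖ N]
variable {N' : Type} [AddCommGroup N'] [Module k N'] [Module E N'] [Module Eᵐᵒᵖ N']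
  [SMulCommClass E Eᵐᵒᵖ N'] [IsScalarTower k E N'] [IsScalarTower k Eᵐᵒᵖ N']

/-- The bimodule map `B ⊗ Bᵐᵒᵖ → N` sending `1` to `n`, where `B` acts on `N` through `φ`. -/
def freeEval (n : N) : B ⊗[k] Bᵐᵒᵖ →ₗ[k] N :=
  TensorProduct.lift <| LinearMap.mk₂ k (fun x y => φ x • op (φ (unop y)) • n)
    (by intros; simp [add_smul]) (by intros; simp)
    (by intros; simp [add_smul]) (fun c x y => by simpa using smul_comm (φ x) c _)

@[simp]
lemma freeEval_tmul (n : N) (x : B) (y : Bᵐᵒᵖ) :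
    freeEval φ n (x ⊗ₜ[k] y) = φ x • op (φ (unop y)) • n := rfl

lemma freeEval_left (n : N) (b : B) (z : B ⊗[k] Bᵐᵒᵖ) :
    freeEval φ n ((b ⊗ₜ[k] (1 : Bᵐᵒᵖ)) * z) = φ b • freeEval φ n z := by
  induction z with
  | zero => simp
  | add x y hx hy => rw [mul_add, map_add, map_add, hx, hy, smul_add]
  | tmul x y => simp [mul_smul]

lemma freeEval_right (n : N) (b : B) (z : B ⊗[k] Bᵐᵒᵖ) :
    freeEval φ n (((1 : B) ⊗ₜ[k] op b) * z) = op (φ b) • freeEval φ n z := by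
  induction z with
  | zero => simp
  | add x y hx hy => rw [mul_add, map_add, map_add, hx, hy, smul_add]
  | tmul x y => simp [mul_smul, smul_comm (φ x) (op (φ b))]

/-- The bimodule map `(B ⊗ Bᵐᵒᵖ)ⁿ → N` sending the standard generators to `s`. -/
def freeLift {n : ℕ} (s : Fin n → N) : (Fin n → B ⊗[k] Bᵐᵒᵖ) →ₗ[k] N :=
  ∑ i, freeEval φ (s i) ∘ₗ LinearMap.proj i

lemma freeLift_apply {n : ℕ} (s : Fin n → N) (w : Fin n → B ⊗[k] Bᵐᵒᵖ) :
    freeLift φ s w = ∑ i, freeEval φ (s i) (w i) := by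
  simp [freeLift]

lemma freeLift_left {n : ℕ} (s : Fin n → N) (b : B) (w : Fin n → B ⊗[k] Bᵐᵒᵖ) :
    freeLift φ s (fun i => (b ⊗ₜ[k] (1 : Bᵐᵒᵖ)) * w i) = φ b • freeLift φ s w := by
  simp [freeLift_apply, freeEval_left, Finset.smul_sum]

lemma freeLift_right {n : ℕ} (s : Fin n → N) (b : B) (w : Fin n → B ⊗[k] Bᵐᵒᵖ) :
    freeLift φ s (fun i => ((1 : B) ⊗ₜ[k] op b) * w i) = op (φ b) • freeLift φ s w := by
  simp [freeLift_apply, freeEval_right, Finset.smul_sum]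

lemma freeLift_single {n : ℕ} (s : Fin n → N) (i : Fin n) (z : B ⊗[k] Bᵐᵒᵖ) :
    freeLift φ s (Pi.single i z) = freeEval φ (s i) z := by
  rw [freeLift_apply, Finset.sum_eq_single i]
  · simp
  · intro j _ hj
    simp [Pi.single_eq_of_ne hj]
  · simp

/-- A bimodule map out of a free bimodule is determined by the images of the generators. -/
lemma eq_freeLift {n : ℕ} (h : (Fin n → B ⊗[k] Bᵐᵒᵖ) →ₗ[k] N)
    (hl : ∀ (b : B) (w : Fin n → B ⊗[k] Bᵐᵒᵖ),
      h (fun i => (b ⊗ₜ[k] (1 : Bᵐᵒᵖ)) * w i) = φ b • h w)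
    (hr : ∀ (b : B) (w : Fin n → B ⊗[k] Bᵐᵒᵖ),
      h (fun i => ((1 : B) ⊗ₜ[k] op b) * w i) = op (φ b) • h w) :
    h = freeLift φ (fun i => h (Pi.single i 1)) := by
  refine LinearMap.pi_ext' fun i => TensorProduct.ext' fun x y => ?_
  have key : (Pi.single i (x ⊗ₜ[k] y) : Fin n → B ⊗[k] Bᵐᵒᵖ) =
      fun j => (x ⊗ₜ[k] (1 : Bᵐᵒᵖ)) * (((1 : B) ⊗ₜ[k] op (unop y)) *
        (Pi.single i 1 : Fin n → B ⊗[k] Bᵐᵒᵖ) j) := by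
    funext j
    rcases eq_or_ne j i with rfl | hj
    · simp
    · simp [Pi.single_eq_of_ne hj]
  simp only [LinearMap.comp_apply, LinearMap.coe_single, freeLift_single, freeEval_tmul]
  rw [key, hl x, hr (unop y)]

/-- Retracts of finite free bimodules lift along surjective bimodule maps. -/
lemma exists_bimodule_lift
    {P : Type} [AddCommGroup P] [Module k P] [Module B P] [Module Bᵐᵒᵖ P]
    (hP : ∃ (n : ℕ) (f : P →ₗ[k] (Fin n → B ⊗[k] Bᵐᵒᵖ))
        (g : (Fin n → B ⊗[k] Bᵐᵒᵖ) →ₗ[k] P),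
      (∀ x, g (f x) = x) ∧
      (∀ (b : B) (m : P), f (b • m) = fun i => (b ⊗ₜ[k] (1 : Bᵐᵒᵖ)) * f m i) ∧
      (∀ (b : B) (m : P), f (op b • m) = fun i => ((1 : B) ⊗ₜ[k] op b) * f m i) ∧
      (∀ (b : B) (v : Fin n → B ⊗[k] Bᵐᵒᵖ),
        g (fun i => (b ⊗ₜ[k] (1 : Bᵐᵒᵖ)) * v i) = b • g v) ∧
      (∀ (b : B) (v : Fin n → B ⊗[k] Bᵐᵒᵖ),
        g (fun i => ((1 : B) ⊗ₜ[k] op b) * v i) = op b • g v))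
    (p : N' →ₗ[k] N) (hp : Function.Surjective p)
    (hpl : ∀ (b : B) (x : N'), p (φ' b • x) = φ b • p x)
    (hpr : ∀ (b : B) (x : N'), p (op (φ' b) • x) = op (φ b) • p x)
    (u : P →ₗ[k] N) (hul : ∀ (b : B) (m : P), u (b • m) = φ b • u m)
    (hur : ∀ (b : B) (m : P), u (op b • m) = op (φ b) • u m) :
    ∃ v : P →ₗ[k] N', (∀ m, p (v m) = u m) ∧ (∀ (b : B) (m : P), v (b • m) = φ' b • v m) ∧
      (∀ (b : B) (m : P), v (op b • m) = op (φ' b) • v m) := by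
  obtain ⟨n, f, g, hgf, hfl, hfr, hgl, hgr⟩ := hP
  choose s hs using fun i : Fin n => hp (u (g (Pi.single i 1)))
  refine ⟨freeLift φ' s ∘ₗ f, fun m => ?_, fun b m => ?_, fun b m => ?_⟩
  · have h₁ := eq_freeLift φ (p ∘ₗ freeLift φ' s)
      (fun b w => by simp [freeLift_left, hpl]) (fun b w => by simp [freeLift_right, hpr])
    have h₂ := eq_freeLift φ (u ∘ₗ g)
      (fun b w => by simp [hgl, hul]) (fun b w => by simp [hgr, hur])
    have h₃ : p ∘ₗ freeLift φ' s = u ∘ₗ g := by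
      rw [h₁, h₂]
      congr 1
      funext i
      simp [freeLift_single, hs, Algebra.TensorProduct.one_def]
    simpa [hgf] using LinearMap.congr_fun h₃ (f m)
  · simp [hfl, freeLift_left]
  · simp [hfr, freeLift_right]

end Bimodule

section FreeBimodule

variable (C : Type) [Ring C] [Algebra k C] (n : ℕ)

/-- The free bimodule `(C ⊗ Cᵐᵒᵖ)ⁿ` with its outer actions. -/
def FreeBimodule : Type := Fin n → C ⊗[k] Cᵐᵒᵖ

instance : AddCommGroup (FreeBimodule k C n) :=
  inferInstanceAs (AddCommGroup (Fin n → C ⊗[k] Cᵐᵒᵖ))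

instance : Module k (FreeBimodule k C n) :=
  inferInstanceAs (Module k (Fin n → C ⊗[k] Cᵐᵒᵖ))

instance : Module (C ⊗[k] Cᵐᵒᵖ) (FreeBimodule k C n) :=
  inferInstanceAs (Module (C ⊗[k] Cᵐᵒᵖ) (Fin n → C ⊗[k] Cᵐᵒᵖ))

instance : IsScalarTower k (C ⊗[k] Cᵐᵒᵖ) (FreeBimodule k C n) :=
  inferInstanceAs (IsScalarTower k (C ⊗[k] Cᵐᵒᵖ) (Fin n → C ⊗[k] Cᵐᵒᵖ))

instance : Module C (FreeBimodule k C n) :=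
  Module.compHom _ (Algebra.TensorProduct.includeLeft : C →ₐ[k] C ⊗[k] Cᵐᵒᵖ).toRingHom

instance : Module Cᵐᵒᵖ (FreeBimodule k C n) :=
  Module.compHom _ (Algebra.TensorProduct.includeRight : Cᵐᵒᵖ →ₐ[k] C ⊗[k] Cᵐᵒᵖ).toRingHom

variable {C n}

lemma FreeBimodule.smul_def (a : C) (v : FreeBimodule k C n) :
    a • v = (a ⊗ₜ[k] (1 : Cᵐᵒᵖ)) • v := rfl

lemma FreeBimodule.op_smul_def (a : Cᵐᵒᵖ) (v : FreeBimodule k C n) :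
    a • v = ((1 : C) ⊗ₜ[k] a) • v := rfl

instance : SMulCommClass C Cᵐᵒᵖ (FreeBimodule k C n) where
  smul_comm a b v := by
    simp only [FreeBimodule.smul_def, FreeBimodule.op_smul_def, smul_smul,
      Algebra.TensorProduct.tmul_mul_tmul, mul_one, one_mul]

instance : IsScalarTower k C (FreeBimodule k C n) where
  smul_assoc c a v := by
    rw [FreeBimodule.smul_def, FreeBimodule.smul_def, ← TensorProduct.smul_tmul', smul_assoc]

instance : IsScalarTower k Cᵐᵒᵖ (FreeBimodule k C n) where
  smul_assoc c a v := by
    rw [FreeBimodule.op_smul_def, FreeBimodule.op_smul_def, TensorProduct.tmul_smul, smul_assoc]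

end FreeBimodule

section OmegaBimodule

variable {k}
variable {R : Type} [Ring R] [Algebra k R]
variable {C : Type} [Ring C] [Algebra k C] {ρ : R →ₐ[k] C}

lemma QR.induction {motive : QR k R C ρ → Prop} (q : QR k R C ρ)
    (tmul : ∀ x y : C, motive (Submodule.Quotient.mk (x ⊗ₜ[k] y)))
    (add : ∀ x y, motive x → motive y → motive (x + y)) : motive q := by
  obtain ⟨z, rfl⟩ := Submodule.Quotient.mk_surjective _ q
  induction z with
  | zero => simpa using tmul 0 0
  | add x y hx hy => exact add _ _ hx hy
  | tmul x y => exact tmul x y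

@[simp]
lemma lact_mk (a x y : C) : lact k R C ρ a (Submodule.Quotient.mk (x ⊗ₜ[k] y)) =
    Submodule.Quotient.mk ((a * x) ⊗ₜ[k] y) := by
  simp [lact]

@[simp]
lemma ract_mk (a x y : C) : ract k R C ρ a (Submodule.Quotient.mk (x ⊗ₜ[k] y)) =
    Submodule.Quotient.mk (x ⊗ₜ[k] (y * a)) := by
  simp [ract]

@[simp]
lemma mulBar_mk (x y : C) :
    mulBar k R C ρ (Submodule.Quotient.mk (x ⊗ₜ[k] y)) = x * y := by
  simp [mulBar]

lemma mulBar_lact (a : C) (q : QR k R C ρ) :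
    mulBar k R C ρ (lact k R C ρ a q) = a * mulBar k R C ρ q := by
  induction q using QR.induction with
  | tmul x y => simp [mul_assoc]
  | add x y hx hy => simp only [map_add, hx, hy, mul_add]

lemma mulBar_ract (a : C) (q : QR k R C ρ) :
    mulBar k R C ρ (ract k R C ρ a q) = mulBar k R C ρ q * a := by
  induction q using QR.induction with
  | tmul x y => simp [mul_assoc]
  | add x y hx hy => simp only [map_add, hx, hy, add_mul]

lemma lact_one (q : QR k R C ρ) : lact k R C ρ 1 q = q := by
  induction q using QR.induction with
  | tmul x y => simp
  | add x y hx hy => simp only [map_add, hx, hy]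

lemma ract_one (q : QR k R C ρ) : ract k R C ρ 1 q = q := by
  induction q using QR.induction with
  | tmul x y => simp
  | add x y hx hy => simp only [map_add, hx, hy]

lemma lact_mul (a b : C) (q : QR k R C ρ) :
    lact k R C ρ (a * b) q = lact k R C ρ a (lact k R C ρ b q) := by
  induction q using QR.induction with
  | tmul x y => simp [mul_assoc]
  | add x y hx hy => simp only [map_add, hx, hy]

lemma ract_mul (a b : C) (q : QR k R C ρ) :
    ract k R C ρ (a * b) q = ract k R C ρ b (ract k R C ρ a q) := by
  induction q using QR.induction with
  | tmul x y => simp [mul_assoc]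
  | add x y hx hy => simp only [map_add, hx, hy]

lemma lact_ract (a b : C) (q : QR k R C ρ) :
    lact k R C ρ a (ract k R C ρ b q) = ract k R C ρ b (lact k R C ρ a q) := by
  induction q using QR.induction with
  | tmul x y => simp
  | add x y hx hy => simp only [map_add, hx, hy]

lemma lact_add (a b : C) (q : QR k R C ρ) :
    lact k R C ρ (a + b) q = lact k R C ρ a q + lact k R C ρ b q := by
  induction q using QR.induction with
  | tmul x y => simp [add_mul, add_tmul]
  | add x y hx hy => simp only [map_add, hx, hy]; abel

lemma ract_add (a b : C) (q : QR k R C ρ) :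
    ract k R C ρ (a + b) q = ract k R C ρ a q + ract k R C ρ b q := by
  induction q using QR.induction with
  | tmul x y => simp [mul_add, tmul_add]
  | add x y hx hy => simp only [map_add, hx, hy]; abel

lemma lact_smul (c : k) (a : C) (q : QR k R C ρ) :
    lact k R C ρ (c • a) q = c • lact k R C ρ a q := by
  induction q using QR.induction with
  | tmul x y => simp [← smul_tmul']
  | add x y hx hy => simp only [map_add, hx, hy, smul_add]

lemma lact_zero (q : QR k R C ρ) : lact k R C ρ 0 q = 0 := by
  simpa using lact_smul (0 : k) (0 : C) q

lemma ract_smul (c : k) (a : C) (q : QR k R C ρ) :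
    ract k R C ρ (c • a) q = c • ract k R C ρ a q := by
  induction q using QR.induction with
  | tmul x y => simp
  | add x y hx hy => simp only [map_add, hx, hy, smul_add]

lemma ract_zero (q : QR k R C ρ) : ract k R C ρ 0 q = 0 := by
  simpa using ract_smul (0 : k) (0 : C) q

lemma mem_Omega {q : QR k R C ρ} : q ∈ Omega k R C ρ ↔ mulBar k R C ρ q = 0 :=
  LinearMap.mem_ker

lemma lact_mem (a : C) {q : QR k R C ρ} (hq : q ∈ Omega k R C ρ) :
    lact k R C ρ a q ∈ Omega k R C ρ := by
  rw [mem_Omega] at hq ⊢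
  rw [mulBar_lact, hq, mul_zero]

lemma ract_mem (a : C) {q : QR k R C ρ} (hq : q ∈ Omega k R C ρ) :
    ract k R C ρ a q ∈ Omega k R C ρ := by
  rw [mem_Omega] at hq ⊢
  rw [mulBar_ract, hq, zero_mul]

instance : SMul C (Omega k R C ρ) where
  smul a x := ⟨lact k R C ρ a x, lact_mem a x.2⟩

instance : SMul Cᵐᵒᵖ (Omega k R C ρ) where
  smul a x := ⟨ract k R C ρ (unop a) x, ract_mem (unop a) x.2⟩

lemma Omega.coe_smul (a : C) (x : Omega k R C ρ) :
    ((a • x : Omega k R C ρ) : QR k R C ρ) = lact k R C ρ a x := rfl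

lemma Omega.coe_op_smul (a : Cᵐᵒᵖ) (x : Omega k R C ρ) :
    ((a • x : Omega k R C ρ) : QR k R C ρ) = ract k R C ρ (unop a) x := rfl

instance : Module C (Omega k R C ρ) where
  one_smul x := Subtype.ext (lact_one _)
  mul_smul a b x := Subtype.ext (lact_mul a b _)
  smul_zero a := Subtype.ext (map_zero _)
  smul_add a x y := Subtype.ext (map_add _ _ _)
  add_smul a b x := Subtype.ext (lact_add a b _)
  zero_smul x := Subtype.ext (lact_zero _)

instance : Module Cᵐᵒᵖ (Omega k R C ρ) where
  one_smul x := Subtype.ext (ract_one _)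
  mul_smul a b x := Subtype.ext (ract_mul (unop b) (unop a) _)
  smul_zero a := Subtype.ext (map_zero _)
  smul_add a x y := Subtype.ext (map_add _ _ _)
  add_smul a b x := Subtype.ext (ract_add (unop a) (unop b) _)
  zero_smul x := Subtype.ext (ract_zero _)

instance : SMulCommClass C Cᵐᵒᵖ (Omega k R C ρ) where
  smul_comm a b _ := Subtype.ext (lact_ract a (unop b) _)

instance : IsScalarTower k C (Omega k R C ρ) where
  smul_assoc c a _ := Subtype.ext (lact_smul c a _)

instance : IsScalarTower k Cᵐᵒᵖ (Omega k R C ρ) where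
  smul_assoc c a _ := Subtype.ext (ract_smul c (unop a) _)

variable (ρ) in
/-- The universal derivation `c ↦ 1 ⊗ c - c ⊗ 1`. -/
def univDer : C →ₗ[k] Omega k R C ρ :=
  LinearMap.codRestrict _
    ((Submodule.mkQ _) ∘ₗ (TensorProduct.mk k C C 1 - (TensorProduct.mk k C C).flip 1))
    (fun c => by simp [mem_Omega])

lemma coe_univDer (c : C) : (univDer ρ c : QR k R C ρ) =
    Submodule.Quotient.mk ((1 : C) ⊗ₜ[k] c) - Submodule.Quotient.mk (c ⊗ₜ[k] (1 : C)) := rfl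

lemma univDer_mul (a b : C) :
    univDer ρ (a * b) = a • univDer ρ b + op b • univDer ρ a := by
  apply Subtype.ext
  simp [coe_univDer, Omega.coe_smul, Omega.coe_op_smul]

lemma univDer_base (r : R) : univDer ρ (ρ r) = 0 := by
  apply Subtype.ext
  rw [coe_univDer, Submodule.coe_zero, ← neg_eq_zero, neg_sub, ← Submodule.Quotient.mk_sub,
    Submodule.Quotient.mk_eq_zero]
  exact Submodule.subset_span ⟨1, 1, r, by simp⟩

/-- As a left module, `Ω¹` is generated by the image of the universal derivation. -/
lemma Omega.eq_top_of_univDer_mem (W : Submodule C (Omega k R C ρ))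
    (hW : ∀ c, univDer ρ c ∈ W) : W = ⊤ := by
  have key : ∀ q : QR k R C ρ, ∃ w ∈ W,
      (w : QR k R C ρ) = q - Submodule.Quotient.mk (mulBar k R C ρ q ⊗ₜ[k] (1 : C)) := by
    intro q
    induction q using QR.induction with
    | tmul x y => exact ⟨x • univDer ρ y, W.smul_mem _ (hW y), by
        simp [Omega.coe_smul, coe_univDer]⟩
    | add x y hx hy =>
      obtain ⟨v, hv, hv'⟩ := hx
      obtain ⟨w, hw, hw'⟩ := hy
      refine ⟨v + w, W.add_mem hv hw, ?_⟩
      rw [Submodule.coe_add, hv', hw', map_add, add_tmul, Submodule.Quotient.mk_add]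
      abel
  refine eq_top_iff.2 fun x _ => ?_
  obtain ⟨w, hw, hw'⟩ := key x
  rw [mem_Omega.1 x.2, zero_tmul, Submodule.Quotient.mk_zero, sub_zero] at hw'
  rwa [← Subtype.ext hw']

variable {A : Type} [Ring A] [Algebra k A] (φ : C →ₐ[k] A)
variable {N : Type} [AddCommGroup N] [Module k N] [Module A N] [Module Aᵐᵒᵖ N]
  [SMulCommClass A Aᵐᵒᵖ N] [IsScalarTower k A N] [IsScalarTower k Aᵐᵒᵖ N]

/-- The universal property of `Ω¹`: a derivation vanishing on the base factors through a
bimodule map. -/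
lemma exists_Omega_lift (D : C →ₗ[k] N)
    (hD : ∀ a b, D (a * b) = φ a • D b + op (φ b) • D a) (hR : ∀ r, D (ρ r) = 0) :
    ∃ u : Omega k R C ρ →ₗ[k] N, (∀ c, u (univDer ρ c) = D c) ∧
      (∀ (a : C) x, u (a • x) = φ a • u x) ∧ (∀ (a : C) x, u (op a • x) = op (φ a) • u x) := by
  have hD1 : D 1 = 0 := by simpa using hR 1
  let T : C ⊗[k] C →ₗ[k] N := TensorProduct.lift <| LinearMap.mk₂ k (fun x y => φ x • D y)
    (by intros; simp [add_smul]) (by intros; simp)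
    (by intros; simp) (fun c x y => by simpa using smul_comm (φ x) c _)
  have hT : ∀ x y, T (x ⊗ₜ[k] y) = φ x • D y := fun _ _ => rfl
  let U : QR k R C ρ →ₗ[k] N := Submodule.liftQ _ T (by
    rw [Bal, Submodule.span_le]
    rintro z ⟨x, y, r, rfl⟩
    simp [hT, hD, hR, mul_smul])
  have hU : ∀ x y, U (Submodule.Quotient.mk (x ⊗ₜ[k] y)) = φ x • D y := fun _ _ => rfl
  have hUl : ∀ a q, U (lact k R C ρ a q) = φ a • U q := by
    intro a q
    induction q using QR.induction with
    | tmul x y => simp [hU, mul_smul]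
    | add x y hx hy => simp only [map_add, hx, hy, smul_add]
  have hUr : ∀ a q, U (ract k R C ρ a q) = op (φ a) • U q + φ (mulBar k R C ρ q) • D a := by
    intro a q
    induction q using QR.induction with
    | tmul x y => simp [hU, hD, mul_smul, smul_comm (φ x) (op (φ a)), add_comm]
    | add x y hx hy => simp only [map_add, hx, hy, smul_add, add_smul]; abel
  refine ⟨U ∘ₗ (Omega k R C ρ).subtype, fun c => ?_, fun a x => ?_, fun a x => ?_⟩
  · simp [coe_univDer, hU, hD1]
  · simp [Omega.coe_smul, hUl]
  · simp [Omega.coe_op_smul, hUr, mem_Omega.1 x.2]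

/-- Relative derivations of a smooth algebra lift along surjective bimodule maps. -/
lemma exists_derivation_lift (hC : OmegaIsProjectiveBimodule k R C ρ)
    {N' : Type} [AddCommGroup N'] [Module k N'] [Module A N'] [Module Aᵐᵒᵖ N']
    [SMulCommClass A Aᵐᵒᵖ N'] [IsScalarTower k A N'] [IsScalarTower k Aᵐᵒᵖ N']
    (p : N' →ₗ[k] N) (hp : Function.Surjective p)
    (hpl : ∀ (a : A) (x : N'), p (a • x) = a • p x)
    (hpr : ∀ (a : A) (x : N'), p (op a • x) = op a • p x)
    (D : C →ₗ[k] N) (hD : ∀ a b, D (a * b) = φ a • D b + op (φ b) • D a)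
    (hR : ∀ r, D (ρ r) = 0) :
    ∃ D' : C →ₗ[k] N', (∀ c, p (D' c) = D c) ∧
      (∀ a b, D' (a * b) = φ a • D' b + op (φ b) • D' a) ∧ (∀ r, D' (ρ r) = 0) := by
  obtain ⟨u, hu, hul, hur⟩ := exists_Omega_lift φ D hD hR
  obtain ⟨n, f, g, hgf, hfl, hfr, hgl, hgr⟩ := hC
  obtain ⟨v, hv, hvl, hvr⟩ := exists_bimodule_lift φ φ (P := Omega k R C ρ)
    ⟨n, f, g, hgf, fun b x => hfl b x _ rfl, fun b x => hfr b x _ rfl,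
      fun b w => Subtype.ext (hgl b w), fun b w => Subtype.ext (hgr b w)⟩
    p hp (fun b => hpl _) (fun b => hpr _) u hul hur
  refine ⟨v ∘ₗ univDer ρ, fun c => ?_, fun a b => ?_, fun r => ?_⟩
  · simp [hv, hu]
  · simp [univDer_mul, hvl, hvr]
  · simp [univDer_base]

/-- Generators of `C` over `R` give generators of the bimodule `Ω¹`. -/
lemma freeLift_univDer_surjective {n : ℕ} (s : Fin n → C)
    (hs : Algebra.adjoin k (Set.range ρ ∪ Set.range s) = ⊤) :
    Function.Surjective (freeLift (AlgHom.id k C) fun i => univDer ρ (s i)) := by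
  set p := freeLift (AlgHom.id k C) fun i => univDer ρ (s i) with hp
  have hpl : ∀ a w, a • p w = p (fun i => (a ⊗ₜ[k] (1 : Cᵐᵒᵖ)) * w i) := fun a w =>
    (freeLift_left (AlgHom.id k C) _ a w).symm
  have hpr : ∀ a w, op a • p w = p (fun i => ((1 : C) ⊗ₜ[k] op a) * w i) := fun a w =>
    (freeLift_right (AlgHom.id k C) _ a w).symm
  have hder : ∀ c, univDer ρ c ∈ LinearMap.range p := by
    intro c
    have hc : c ∈ Algebra.adjoin k (Set.range ρ ∪ Set.range s) := hs ▸ Algebra.mem_top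
    induction hc using Algebra.adjoin_induction with
    | mem x hx =>
      rcases hx with ⟨r, rfl⟩ | ⟨i, rfl⟩
      · rw [univDer_base]
        exact zero_mem _
      · exact ⟨Pi.single i 1, by
          simp [hp, freeLift_single, Algebra.TensorProduct.one_def]⟩
    | algebraMap c =>
      rw [← ρ.commutes, univDer_base]
      exact zero_mem _
    | add x y _ _ hx hy =>
      rw [map_add]
      exact add_mem hx hy
    | mul x y _ _ hx hy =>
      obtain ⟨v, hv⟩ := hx
      obtain ⟨w, hw⟩ := hy
      rw [univDer_mul, ← hv, ← hw, hpl, hpr]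
      exact add_mem ⟨_, rfl⟩ ⟨_, rfl⟩
  let W : Submodule C (Omega k R C ρ) :=
    { (LinearMap.range p).toAddSubmonoid with
      smul_mem' := by
        rintro a _ ⟨w, rfl⟩
        exact ⟨_, (hpl a w).symm⟩ }
  have hW : W = ⊤ := Omega.eq_top_of_univDer_mem W hder
  intro x
  have hx : x ∈ W := hW ▸ Submodule.mem_top
  exact hx

/-- If the universal derivation lifts along finite free bimodules, then `Ω¹` is projective. -/
lemma omegaIsProjectiveBimodule_of_lift (hfg : IsFGOverR k R C ρ)
    (h : ∀ (n : ℕ) (p : FreeBimodule k C n →ₗ[k] Omega k R C ρ), Function.Surjective p →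
      (∀ (a : C) x, p (a • x) = a • p x) → (∀ (a : C) x, p (op a • x) = op a • p x) →
      ∃ D : C →ₗ[k] FreeBimodule k C n, (∀ c, p (D c) = univDer ρ c) ∧
        (∀ a b, D (a * b) = a • D b + op b • D a) ∧ (∀ r, D (ρ r) = 0)) :
    OmegaIsProjectiveBimodule k R C ρ := by
  obtain ⟨S, hS⟩ := hfg
  let s : Fin S.card → C := fun i => S.equivFin.symm i
  have hs : Set.range s = ↑S := by
    ext x
    constructor
    · rintro ⟨i, rfl⟩
      exact (S.equivFin.symm i).2
    · intro hx
      exact ⟨S.equivFin ⟨x, hx⟩, by simp [s]⟩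
  let p : FreeBimodule k C S.card →ₗ[k] Omega k R C ρ :=
    freeLift (AlgHom.id k C) fun i => univDer ρ (s i)
  have hpl : ∀ (a : C) x, p (a • x) = a • p x := freeLift_left (AlgHom.id k C) _
  have hpr : ∀ (a : C) x, p (op a • x) = op a • p x := freeLift_right (AlgHom.id k C) _
  have hp : Function.Surjective p := freeLift_univDer_surjective s (by rw [hs, hS])
  obtain ⟨D, hpD, hD, hR⟩ := h S.card p hp hpl hpr
  obtain ⟨f, hf, hfl, hfr⟩ := exists_Omega_lift (ρ := ρ) (AlgHom.id k C) D hD hR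
  refine ⟨S.card, f, p, fun x => ?_, ?_, ?_, fun a v => ?_, fun a v => ?_⟩
  · let W : Submodule C (Omega k R C ρ) :=
      { carrier := {x | p (f x) = x}
        zero_mem' := by simp
        add_mem' := fun {x y} hx hy => by
          change p (f (x + y)) = x + y
          rw [map_add, map_add, hx, hy]
        smul_mem' := fun a x hx => by
          change p (f (a • x)) = a • x
          rw [hfl, AlgHom.id_apply, hpl, hx] }
    have hW : W = ⊤ := Omega.eq_top_of_univDer_mem W fun c => by
      change p (f _) = _
      rw [hf, hpD]
    have hx : x ∈ W := hW ▸ Submodule.mem_top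
    exact hx
  · intro a x y hy
    obtain rfl : y = a • x := Subtype.ext hy
    exact hfl a x
  · intro a x y hy
    obtain rfl : y = op a • x := Subtype.ext hy
    exact hfr a x
  · exact congrArg Subtype.val (hpl a v)
  · exact congrArg Subtype.val (hpr a v)

end OmegaBimodule

section SquareZero

variable {k}
variable {B A : Type} [Ring B] [Algebra k B] [Ring A] [Algebra k A] (φ : B →ₐ[k] A)
variable {N : Type} [AddCommGroup N] [Module k N] [Module A N] [Module Aᵐᵒᵖ N]
  [SMulCommClass A Aᵐᵒᵖ N] [IsScalarTower k A N] [IsScalarTower k Aᵐᵒᵖ N]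
variable {N' : Type} [AddCommGroup N'] [Module k N'] [Module A N'] [Module Aᵐᵒᵖ N']
  [SMulCommClass A Aᵐᵒᵖ N'] [IsScalarTower k A N'] [IsScalarTower k Aᵐᵒᵖ N']

/-- The algebra map `b ↦ (φ b, D b)` into a square-zero extension given by a derivation. -/
def derHom (D : B →ₗ[k] N) (hD : ∀ a b, D (a * b) = φ a • D b + op (φ b) • D a) :
    B →ₐ[k] TrivSqZeroExt A N :=
  AlgHom.ofLinearMap
    (LinearMap.prod φ.toLinearMap D : B →ₗ[k] A × N)
    (by
      have hD1 : D 1 = 0 := by simpa using hD 1 1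
      exact TrivSqZeroExt.ext (map_one φ) hD1)
    (fun a b => TrivSqZeroExt.ext (map_mul φ a b) (hD a b))

/-- Functoriality of the square-zero extension in the bimodule. -/
def sqZeroMap (p : N' →ₗ[k] N) (hpl : ∀ (a : A) (x : N'), p (a • x) = a • p x)
    (hpr : ∀ (a : A) (x : N'), p (op a • x) = op a • p x) :
    TrivSqZeroExt A N' →ₐ[k] TrivSqZeroExt A N :=
  AlgHom.ofLinearMap
    (LinearMap.prodMap LinearMap.id p : A × N' →ₗ[k] A × N)
    (TrivSqZeroExt.ext rfl (map_zero p))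
    (fun x y => TrivSqZeroExt.ext rfl (by
      change p (x.fst • y.snd + op y.fst • x.snd) = x.fst • p y.snd + op y.fst • p x.snd
      rw [map_add, hpl, hpr]))

end SquareZero

theorem statement5
    (R : Type) [Ring R] [Algebra k R]
    (B : Type) [Ring B] [Algebra k B] (ρR : R →ₐ[k] B)
    (M : Type) [AddCommGroup M] [Module k M] [Module B M] [Module Bᵐᵒᵖ M]
    [SMulCommClass B Bᵐᵒᵖ M] [IsScalarTower k B M] [IsScalarTower k Bᵐᵒᵖ M]
    (A : Type) [Ring A] [Algebra k A] (ιB : B →ₐ[k] A) (ιM : M →ₗ[k] A)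
    -- B is smooth over R
    (hBsmooth : IsSmoothOver k R B ρR)
    -- M is a finitely generated projective B-bimodule
    (hMfg : ∃ S : Finset M,
      Submodule.span k {x | ∃ (b b' : B) (s : M), s ∈ S ∧ x = b • (op b') • s} = ⊤)
    (hMproj : ∃ (n : ℕ) (f : M →ₗ[k] (Fin n → B ⊗[k] Bᵐᵒᵖ))
        (g : (Fin n → B ⊗[k] Bᵐᵒᵖ) →ₗ[k] M),
      (∀ x, g (f x) = x) ∧
      (∀ (b : B) (m : M), f (b • m) = fun i => (b ⊗ₜ[k] (1 : Bᵐᵒᵖ)) * f m i) ∧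
      (∀ (b : B) (m : M), f (op b • m) = fun i => ((1 : B) ⊗ₜ[k] op b) * f m i) ∧
      (∀ (b : B) (v : Fin n → B ⊗[k] Bᵐᵒᵖ),
        g (fun i => (b ⊗ₜ[k] (1 : Bᵐᵒᵖ)) * v i) = b • g v) ∧
      (∀ (b : B) (v : Fin n → B ⊗[k] Bᵐᵒᵖ),
        g (fun i => ((1 : B) ⊗ₜ[k] op b) * v i) = op b • g v))
    -- A = T_B M via the universal property
    (hL : ∀ (b : B) (m : M), ιM (b • m) = ιB b * ιM m)
    (hRc : ∀ (b : B) (m : M), ιM (op b • m) = ιM m * ιB b)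
    (hUP : ∀ (C : Type) [Ring C] [Algebra k C] (fB : B →ₐ[k] C) (fM : M →ₗ[k] C),
      (∀ (b : B) (m : M), fM (b • m) = fB b * fM m) →
      (∀ (b : B) (m : M), fM (op b • m) = fM m * fB b) →
      ∃! F : A →ₐ[k] C, (∀ b : B, F (ιB b) = fB b) ∧ (∀ m : M, F (ιM m) = fM m)) :
    -- Conclusion: A = T_B M is smooth over R.
    IsSmoothOver k R A (ιB.comp ρR) := by
  have hgen : Algebra.adjoin k (Set.range ιB ∪ Set.range ιM) = ⊤ := by
    set T := Algebra.adjoin k (Set.range ιB ∪ Set.range ιM)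
    have hB : ∀ b, ιB b ∈ T := fun b => Algebra.subset_adjoin (Or.inl ⟨b, rfl⟩)
    have hM : ∀ m, ιM m ∈ T := fun m => Algebra.subset_adjoin (Or.inr ⟨m, rfl⟩)
    obtain ⟨F, ⟨hFB, hFM⟩, -⟩ := hUP T (ιB.codRestrict T hB)
      (ιM.codRestrict (Subalgebra.toSubmodule T) hM)
      (fun b m => Subtype.ext (hL b m)) (fun b m => Subtype.ext (hRc b m))
    have hF : T.val.comp F = AlgHom.id k A := (hUP A ιB ιM hL hRc).unique
      ⟨fun b => congrArg Subtype.val (hFB b), fun m => congrArg Subtype.val (hFM m)⟩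
      ⟨fun _ => rfl, fun _ => rfl⟩
    refine eq_top_iff.2 fun a _ => ?_
    rw [← AlgHom.id_apply (R := k) a, ← hF]
    exact (F a).2
  have hfg : IsFGOverR k R A (ιB.comp ρR) := by
    classical
    obtain ⟨⟨S, hS⟩, -⟩ := hBsmooth
    obtain ⟨S', hS'⟩ := hMfg
    refine ⟨S.image ιB ∪ S'.image ιM, eq_top_iff.2 ?_⟩
    set T := Algebra.adjoin k (Set.range (ιB.comp ρR) ∪ ↑(S.image ιB ∪ S'.image ιM))
    have hB : ∀ b, ιB b ∈ T := by
      have : Algebra.adjoin k (Set.range ρR ∪ ↑S) ≤ T.comap ιB := by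
        refine Algebra.adjoin_le ?_
        rintro _ (⟨r, rfl⟩ | hs)
        · exact Algebra.subset_adjoin (Or.inl ⟨r, rfl⟩)
        · exact Algebra.subset_adjoin (Or.inr (Finset.mem_coe.2 (Finset.mem_union_left _
            (Finset.mem_image_of_mem _ hs))))
      rw [hS] at this
      exact fun b => this Algebra.mem_top
    have hM : ∀ m, ιM m ∈ T := by
      have : Submodule.span k {x | ∃ (b b' : B) (s : M), s ∈ S' ∧ x = b • (op b') • s} ≤
          (Subalgebra.toSubmodule T).comap ιM := by
        refine Submodule.span_le.2 ?_
        rintro _ ⟨b, b', s, hs, rfl⟩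
        have hsT : ιM s ∈ T := Algebra.subset_adjoin (Or.inr (Finset.mem_coe.2
          (Finset.mem_union_right _ (Finset.mem_image_of_mem _ hs))))
        change ιM _ ∈ T
        rw [hL, hRc]
        exact mul_mem (hB b) (mul_mem hsT (hB b'))
      rw [hS'] at this
      exact fun m => this Submodule.mem_top
    rw [← hgen]
    refine Algebra.adjoin_le ?_
    rintro _ (⟨b, rfl⟩ | ⟨m, rfl⟩)
    exacts [hB b, hM m]
  refine ⟨hfg, omegaIsProjectiveBimodule_of_lift hfg fun n p hp hpl hpr => ?_⟩
  let d := univDer (k := k) (ιB.comp ρR)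
  obtain ⟨D, hpD, hD, hDR⟩ := exists_derivation_lift ιB hBsmooth.2 p hp hpl hpr
    (d ∘ₗ ιB.toLinearMap) (fun a b => by simp [d, univDer_mul])
    (fun r => univDer_base (ρ := ιB.comp ρR) r)
  let π := sqZeroMap p hpl hpr
  let δ := derHom (AlgHom.id k A) d univDer_mul
  let φ' := derHom ιB D hD
  have hπφ : ∀ b, π (φ' b) = δ (ιB b) := fun b => TrivSqZeroExt.ext rfl (hpD b)
  have hπ : Function.Surjective π := fun x => by
    obtain ⟨y, hy⟩ := hp x.snd
    exact ⟨(x.fst, y), TrivSqZeroExt.ext rfl hy⟩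
  obtain ⟨v, hv, hvl, hvr⟩ := exists_bimodule_lift (δ.comp ιB) φ' hMproj π.toLinearMap hπ
    (fun b x => by simp [hπφ]) (fun b x => by simp [hπφ]) (δ.toLinearMap ∘ₗ ιM)
    (fun b m => by simp [hL]) (fun b m => by simp [hRc])
  obtain ⟨F, ⟨hFB, hFM⟩, -⟩ := hUP _ φ' v hvl hvr
  have hF : π.comp F = δ := (hUP _ (δ.comp ιB) (δ.toLinearMap ∘ₗ ιM)
    (fun b m => by simp [hL]) (fun b m => by simp [hRc])).unique
    ⟨fun b => by simp [hFB, hπφ], fun m => by simpa [hFM] using hv m⟩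
    ⟨fun _ => rfl, fun _ => rfl⟩
  have hF₁ : ∀ a, (F a).fst = a := fun a => congrArg TrivSqZeroExt.fst (AlgHom.congr_fun hF a)
  refine ⟨(LinearMap.snd k A (FreeBimodule k A n)) ∘ₗ F.toLinearMap, fun a => ?_, fun a b => ?_,
    fun r => ?_⟩
  · exact congrArg TrivSqZeroExt.snd (AlgHom.congr_fun hF a)
  · change (F (a * b)).snd = a • (F b).snd + op b • (F a).snd
    rw [map_mul, TrivSqZeroExt.snd_mul, hF₁, hF₁]
  · change (F (ιB (ρR r))).snd = 0
    rw [hFB]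
    exact hDR r

end Stmt5
end
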